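/- Let a ∈ ℕ, c ≥ 1, n ≥ 1, and 2 ≤ k₁ ≤ k₂ ≤ ⋯ ≤ kₙ. Define W₀ = 1 and Wᵢ = W(kᵢ, c^{W₁⋯W_{i−1}}) for i = 1,…,n. Let l₁,…,lₙ be positive integers with l₁ > 0 and, for i = 2,…,n, lᵢ > (W₁−1)l₁ + ⋯ + (W_{i−1}−1)l_{i−1}. Let Aₙ = {a + x₁l₁ + ⋯ + xₙlₙ | 0 ≤ x₁ ≤ W₁−1, …, 0 ≤ xₙ ≤ Wₙ−1}. Then for any c-coloring of Aₙ there exist positive integers aₙ and d₁,…,dₙ with dᵢ = αᵢlᵢ for some positive integer αᵢ satisfying 1 ≤ αᵢ ≤ ⌊(Wᵢ−1)/(kᵢ−1)⌋ for each i = 1,…,n, such that the set Pₙ = {aₙ + x₁d₁ + ⋯ + xₙdₙ | 0 ≤ x₁ ≤ k₁−1, …, 0 ≤ xₙ ≤ kₙ−1} is a subset of Aₙ and is monochromatic. -/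

import Mathlib

/-- `n` witnesses the van der Waerden property for `k` and `c`: every coloring of
`{1,…,n}` with colors `{1,…,c}` contains a monochromatic arithmetic progression of
length `k` inside `{1,…,n}`. -/
def IsVdWWitness (k c n : ℕ) : Prop :=
  ∀ χ : ℕ → ℕ, (∀ m, χ m ∈ Finset.Icc 1 c) →
    ∃ a d : ℕ, 0 < a ∧ 0 < d ∧ a + (k - 1) * d ≤ n ∧
      ∃ γ, ∀ j < k, χ (a + j * d) = γ

/-- The van der Waerden number `W(k,c)`: the least `n` such that every `c`-coloring of
`{1,…,n}` contains a monochromatic arithmetic progression of length `k`. -/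
noncomputable def vdWNumber (k c : ℕ) : ℕ := sInf {n | IsVdWWitness k c n}

lemma vdw_witness_exists (k c : ℕ) (hk : 2 ≤ k) : ∃ n, IsVdWWitness k c n := by
  obtain ⟨ι, _, h⟩ := Combinatorics.Line.exists_mono_in_high_dimension (Fin k) (Finset.Icc 1 c)
  classical
  refine ⟨1 + Fintype.card ι * (k - 1), fun χ hχ => ?_⟩
  obtain ⟨L, γ, hL⟩ := h (fun v => ⟨χ (1 + ∑ i, (v i : ℕ)), hχ _⟩)
  set z : Fin k := ⟨0, by omega⟩ with hz
  set d := (Finset.univ.filter fun i => L.idxFun i = none).card with hd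
  have key : ∀ x : Fin k, (∑ i, (L x i : ℕ)) = (∑ i, (L z i : ℕ)) + x * d := by
    intro x
    have : (x : ℕ) * d = ∑ i, if L.idxFun i = none then (x : ℕ) else 0 := by
      rw [← Finset.sum_filter, Finset.sum_const, smul_eq_mul, mul_comm]
    rw [this, ← Finset.sum_add_distrib]
    refine Finset.sum_congr rfl fun i _ => ?_
    rw [Combinatorics.Line.apply_def, Combinatorics.Line.apply_def]
    cases hi : L.idxFun i <;> simp [hz, hi]
  refine ⟨1 + ∑ i, (L z i : ℕ), d, by omega, ?_, ?_, γ, ?_⟩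
  · obtain ⟨i, hi⟩ := L.proper
    exact Finset.card_pos.2 ⟨i, by simp [hi]⟩
  · have h1 := key ⟨k - 1, by omega⟩
    have h2 : (∑ i, (L ⟨k - 1, by omega⟩ i : ℕ)) ≤ ∑ i : ι, (k - 1) :=
      Finset.sum_le_sum fun i _ => by
        have := (L ⟨k - 1, by omega⟩ i).2
        omega
    simp only [Finset.sum_const, smul_eq_mul, Finset.card_univ] at h2
    simp only at h1
    omega
  · intro j hj
    have h1 := congrArg Subtype.val (hL ⟨j, hj⟩)
    have h2 := key ⟨j, hj⟩
    simp only at h1 h2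
    rw [← h1, h2, add_assoc]

lemma vdWNumber_spec (k c : ℕ) (hk : 2 ≤ k) : IsVdWWitness k c (vdWNumber k c) :=
  Nat.sInf_mem (s := {n | IsVdWWitness k c n}) (vdw_witness_exists k c hk)

lemma IsVdWWitness.apply_fintype {k n : ℕ} {κ : Type} [Fintype κ]
    (h : IsVdWWitness k (Fintype.card κ) n) (f : ℕ → κ) :
    ∃ a d : ℕ, 0 < a ∧ 0 < d ∧ a + (k - 1) * d ≤ n ∧
      ∀ j < k, f (a + j * d) = f a := by
  obtain ⟨a, d, ha, hd, hle, γ, hγ⟩ := h (fun m => (Fintype.equivFin κ (f m) : ℕ) + 1) (by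
    intro m
    have := (Fintype.equivFin κ (f m)).2
    simp only [Finset.mem_Icc]
    omega)
  refine ⟨a, d, ha, hd, hle, fun j hj => ?_⟩
  have h1 := hγ j hj
  have h2 := hγ 0 (by omega)
  simp only [zero_mul, add_zero] at h1 h2
  apply (Fintype.equivFin κ).injective
  apply Fin.ext
  omega

lemma vdw_main (c : ℕ) (k W l : ℕ → ℕ) (n : ℕ)
    (hk : ∀ i, 1 ≤ i → i ≤ n → 2 ≤ k i)
    (hW : ∀ i, 1 ≤ i → i ≤ n →
      IsVdWWitness (k i) (c ^ ∏ j ∈ Finset.Icc 1 (i - 1), W j) (W i))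
    (χ : ℕ → Fin c) (a : ℕ) :
    ∃ b α : ℕ → ℕ, (∀ i ∈ Finset.Icc 1 n, 1 ≤ α i ∧ b i + (k i - 1) * α i + 1 ≤ W i) ∧
      ∃ γ, ∀ x : ℕ → ℕ, (∀ i ∈ Finset.Icc 1 n, x i ≤ k i - 1) →
        χ (a + ∑ i ∈ Finset.Icc 1 n, (b i + x i * α i) * l i) = γ := by
  induction n generalizing a with
  | zero => exact ⟨0, 0, by simp, χ a, by simp⟩
  | succ n ih =>
    have hw := hW (n + 1) (by omega) le_rfl
    have hk' := hk (n + 1) (by omega) le_rfl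
    let κ := ((i : Finset.Icc 1 n) → Fin (W i)) → Fin c
    have hcard : Fintype.card κ = c ^ ∏ j ∈ Finset.Icc 1 n, W j := by
      simp only [κ, Fintype.card_fun, Fintype.card_fin, Fintype.card_pi]
      rw [Finset.prod_coe_sort (Finset.Icc 1 n) W]
    rw [Nat.add_sub_cancel, ← hcard] at hw
    obtain ⟨a0, d, ha0, hd, hle, hf⟩ := hw.apply_fintype
      (fun j y => χ (a + (j - 1) * l (n + 1) + ∑ i : Finset.Icc 1 n, (y i : ℕ) * l i))
    obtain ⟨b, α, hb, γ, hγ⟩ := ih (fun i h1 h2 => hk i h1 (by omega))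
      (fun i h1 h2 => hW i h1 (by omega)) (a + (a0 - 1) * l (n + 1))
    refine ⟨Function.update b (n + 1) (a0 - 1), Function.update α (n + 1) d, ?_, γ, ?_⟩
    · intro i hi
      by_cases h : i = n + 1
      · subst h
        simp only [Function.update_self]
        omega
      · simp only [Function.update_of_ne h]
        apply hb
        simp only [Finset.mem_Icc] at hi ⊢
        omega
    · intro x hx
      have hx' : ∀ i ∈ Finset.Icc 1 n, x i ≤ k i - 1 := fun i hi => hx i (by
        simp only [Finset.mem_Icc] at hi ⊢
        omega)
      have hxl : x (n + 1) < k (n + 1) := by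
        have := hx (n + 1) (by simp)
        omega
      rw [← hγ x hx']
      have h1 := congrFun (hf (x (n + 1)) hxl) (fun i => ⟨b i + x i * α i, by
        have h2 := (hb i i.2).2
        have h3 := Nat.mul_le_mul_right (α i) (hx' i i.2)
        omega⟩)
      simp only at h1
      rw [Finset.sum_coe_sort (Finset.Icc 1 n) (fun i => (b i + x i * α i) * l i)] at h1
      rw [← h1, Finset.sum_Icc_succ_top (by omega)]
      have h4 : ∑ i ∈ Finset.Icc 1 n, (Function.update b (n + 1) (a0 - 1) i +
          x i * Function.update α (n + 1) d i) * l i =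
          ∑ i ∈ Finset.Icc 1 n, (b i + x i * α i) * l i := by
        refine Finset.sum_congr rfl fun i hi => ?_
        have h : i ≠ n + 1 := by
          simp only [Finset.mem_Icc] at hi
          omega
        simp only [Function.update_of_ne h]
      rw [h4]
      simp only [Function.update_self]
      have h5 : a0 + x (n + 1) * d - 1 = a0 - 1 + x (n + 1) * d := by omega
      rw [h5]
      congr 1
      ring

/-- **Proposition 2.1.** Let `a ≥ 1`, `c ≥ 1`, `n ≥ 1`, `2 ≤ k₁ ≤ ⋯ ≤ kₙ`, `W₀ = 1`,
`Wᵢ = W(kᵢ, c^{W₁⋯W_{i−1}})`, and let `l₁,…,lₙ` be positive with `l₁ > 0` and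
`lᵢ > (W₁−1)l₁ + ⋯ + (W_{i−1}−1)l_{i−1}` for `2 ≤ i ≤ n`. Let
`Aₙ = {a + x₁l₁ + ⋯ + xₙlₙ | 0 ≤ xᵢ ≤ Wᵢ−1}`. Then for any `c`-coloring `χ` of `Aₙ`
there exist a positive integer `aₙ` and `dᵢ = αᵢlᵢ` with `1 ≤ αᵢ ≤ ⌊(Wᵢ−1)/(kᵢ−1)⌋` such
that `Pₙ = {aₙ + x₁d₁ + ⋯ + xₙdₙ | 0 ≤ xᵢ ≤ kᵢ−1} ⊆ Aₙ` is monochromatic. -/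
theorem generalized_vdw_finite
    (a c n : ℕ) (ha : 1 ≤ a) (hc : 1 ≤ c) (hn : 1 ≤ n)
    (k : ℕ → ℕ) (hk2 : 2 ≤ k 1) (hkmono : ∀ i, 1 ≤ i → i < n → k i ≤ k (i + 1))
    (W : ℕ → ℕ) (hW0 : W 0 = 1)
    (hW : ∀ i, 1 ≤ i → i ≤ n →
      W i = vdWNumber (k i) (c ^ ∏ j ∈ Finset.Icc 1 (i - 1), W j))
    (l : ℕ → ℕ) (hl1 : 0 < l 1) (hlpos : ∀ i, 1 ≤ i → i ≤ n → 0 < l i)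
    (hl : ∀ i, 2 ≤ i → i ≤ n →
      (∑ j ∈ Finset.Icc 1 (i - 1), (W j - 1) * l j) < l i)
    (A : Set ℕ)
    (hA : A = {m | ∃ x : ℕ → ℕ,
      (∀ i ∈ Finset.Icc 1 n, x i ≤ W i - 1) ∧ m = a + ∑ i ∈ Finset.Icc 1 n, x i * l i})
    (χ : ℕ → ℕ) (hχ : ∀ m ∈ A, χ m ∈ Finset.Icc 1 c) :
    ∃ (a' : ℕ) (α : ℕ → ℕ), 0 < a' ∧
      (∀ i ∈ Finset.Icc 1 n, 1 ≤ α i ∧ α i ≤ (W i - 1) / (k i - 1)) ∧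
      ∃ P : Set ℕ,
        P = {m | ∃ x : ℕ → ℕ, (∀ i ∈ Finset.Icc 1 n, x i ≤ k i - 1) ∧
          m = a' + ∑ i ∈ Finset.Icc 1 n, x i * (α i * l i)} ∧
        P ⊆ A ∧ ∃ γ, ∀ m ∈ P, χ m = γ := by
  classical
  have hk : ∀ i, 1 ≤ i → i ≤ n → 2 ≤ k i := by
    intro i h1
    induction i, h1 using Nat.le_induction with
    | base => exact fun _ => hk2
    | succ i h1 ih => exact fun h2 => (ih (by omega)).trans (hkmono i h1 (by omega))
  have hmem : ∀ m, (if χ m ∈ Finset.Icc 1 c then χ m - 1 else 0) < c := by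
    intro m
    split_ifs with h
    · simp only [Finset.mem_Icc] at h
      omega
    · omega
  obtain ⟨b, α, hb, γ, hγ⟩ := vdw_main c k W l n hk
    (fun i h1 h2 => by
      have h3 := vdWNumber_spec (k i) (c ^ ∏ j ∈ Finset.Icc 1 (i - 1), W j) (hk i h1 h2)
      rwa [← hW i h1 h2] at h3)
    (fun m => ⟨_, hmem m⟩) a
  have hsum : ∀ x : ℕ → ℕ, a + ∑ i ∈ Finset.Icc 1 n, b i * l i +
      ∑ i ∈ Finset.Icc 1 n, x i * (α i * l i) =
      a + ∑ i ∈ Finset.Icc 1 n, (b i + x i * α i) * l i := by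
    intro x
    rw [add_assoc, ← Finset.sum_add_distrib]
    congr 1
    exact Finset.sum_congr rfl fun i _ => by ring
  have hPA : ∀ x : ℕ → ℕ, (∀ i ∈ Finset.Icc 1 n, x i ≤ k i - 1) →
      a + ∑ i ∈ Finset.Icc 1 n, (b i + x i * α i) * l i ∈ A := by
    intro x hx
    rw [hA]
    refine ⟨fun i => b i + x i * α i, fun i hi => ?_, rfl⟩
    have h2 := (hb i hi).2
    have h3 := Nat.mul_le_mul_right (α i) (hx i hi)
    simp only
    omega
  refine ⟨a + ∑ i ∈ Finset.Icc 1 n, b i * l i, α, by omega, ?_, _, rfl, ?_, (γ : ℕ) + 1, ?_⟩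
  · intro i hi
    obtain ⟨h1, h2⟩ := hb i hi
    refine ⟨h1, ?_⟩
    have hi' := Finset.mem_Icc.1 hi
    have := hk i hi'.1 hi'.2
    rw [Nat.le_div_iff_mul_le (by omega), mul_comm]
    omega
  · rintro m ⟨x, hx, rfl⟩
    rw [hsum]
    exact hPA x hx
  · rintro m ⟨x, hx, rfl⟩
    rw [hsum]
    have h1 := congrArg Fin.val (hγ x hx)
    have h2 := hχ _ (hPA x hx)
    simp only [if_pos h2] at h1
    have h3 := Finset.mem_Icc.1 h2
    omega
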